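/- For all integers p ≥ 1, k ≥ 1 and every tuple (j_0,...,j_p) of nonnegative integers, the counts of adapted noncrossing pair partitions satisfy the recurrence N_0(k, (j_0, ..., j_p)) = Σ ∏_{i=0}^{p} N_i(k_i, (j_{i,0}, ..., j_{i,p})), where the sum runs over all tuples (k_0, ..., k_p) of nonnegative integers with k_0 + ... + k_p = k − 1 and all (p+1)-tuples of tuples (j_{i,0},...,j_{i,p}) ∈ ℕ^{p+1}, i = 0,...,p, such that Σ_{i=0}^{p} j_{i,0} = j_0 and Σ_{i=0}^{p} j_{i,r} = j_r − 1 for each r ∈ {1,...,p} (in particular the sum is empty if some j_r = 0 for r ≥ 1). -/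

import Mathlib

/-- The letter at position `r` (1-based, `1 ≤ r ≤ 2p`) of the word
`W₀ = 1 2 … p p* … 2* 1*`; here `(l, false)` encodes the letter `l` and
`(l, true)` encodes the starred letter `l*`. -/
def letter0 (p r : ℕ) : ℕ × Bool :=
  if r ≤ p then (r, false) else (2 * p + 1 - r, true)

/-- The label of position `m` (1-based) under the periodic word `Wᵢᵏ`, where `Wᵢ`
is the cyclic shift of `W₀` to the right by `i` positions. -/
def labelW (p i m : ℕ) : ℕ × Bool :=
  letter0 p ((m - 1 + (2 * p - i)) % (2 * p) + 1)

/-- `π` is a noncrossing pair partition of `{1, …, m}`, encoded as the finite set of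
its blocks, each block written as an ordered pair `(a, b)` with `a < b`:
all entries lie in `{1, …, m}`, every point of `{1, …, m}` is covered, distinct
blocks are disjoint, and no two blocks cross. -/
def IsNCPP (m : ℕ) (π : Finset (ℕ × ℕ)) : Prop :=
  (∀ b ∈ π, 1 ≤ b.1 ∧ b.2 ≤ m ∧ b.1 < b.2) ∧
  (∀ x, 1 ≤ x → x ≤ m → ∃ b ∈ π, x = b.1 ∨ x = b.2) ∧
  (∀ b ∈ π, ∀ c ∈ π, (b.1 = c.1 ∨ b.1 = c.2 ∨ b.2 = c.1 ∨ b.2 = c.2) → b = c) ∧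
  (∀ b ∈ π, ∀ c ∈ π, ¬(b.1 < c.1 ∧ c.1 < b.2 ∧ b.2 < c.2))

/-- `π ∈ NC²₂ₚₖ(Wᵢᵏ)`: a noncrossing pair partition of `{1, …, 2pk}` each of whose
blocks consists of a position labelled `l` and a position labelled `l*` for some
`l ∈ {1, …, p}` (labels taken from the word `Wᵢᵏ`). -/
def AdaptedNCPP (p i k : ℕ) (π : Finset (ℕ × ℕ)) : Prop :=
  IsNCPP (2 * p * k) π ∧
  ∀ b ∈ π, ∃ l, 1 ≤ l ∧ l ≤ p ∧
    ((labelW p i b.1 = (l, false) ∧ labelW p i b.2 = (l, true)) ∨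
     (labelW p i b.1 = (l, true) ∧ labelW p i b.2 = (l, false)))

/-- The right-leg statistic `jₗ(π) = |R_{l+1}(π)| + |R_{l}*(π)|`: the number of blocks
whose right leg (larger element) is labelled `l+1`, plus the number of blocks whose
right leg is labelled `l*` (the conventions `R₀* = R_{p+1} = ∅` hold automatically,
since those labels never occur). -/
def jstat (p i : ℕ) (π : Finset (ℕ × ℕ)) (l : ℕ) : ℕ :=
  (π.filter fun b => labelW p i b.2 = (l + 1, false)).card +
  (π.filter fun b => labelW p i b.2 = (l, true)).card

open Classical in
/-- The finset `NC²₂ₚₖ(Wᵢᵏ)` of noncrossing pair partitions of `{1, …, 2pk}`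
adapted to `Wᵢᵏ`. -/
noncomputable def NCset (p i k : ℕ) : Finset (Finset (ℕ × ℕ)) :=
  (Finset.Icc 1 (2 * p * k) ×ˢ Finset.Icc 1 (2 * p * k)).powerset.filter
    (AdaptedNCPP p i k)

open Classical in
/-- `Nᵢ(k, (j₀, …, j_p))`: the number of `π ∈ NC²₂ₚₖ(Wᵢᵏ)` with `jₗ(π) = jₗ`
for all `0 ≤ l ≤ p`. -/
noncomputable def Ncount (p i k : ℕ) (j : Fin (p + 1) → ℕ) : ℕ :=
  ((NCset p i k).filter fun π => ∀ l : Fin (p + 1), jstat p i π (l : ℕ) = j l).card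

/-- The generating function `𝒩ᵢ(x, d) = Σ_k (Σ_j Nᵢ(k, j) d^j) x^k ∈ ℝ[[x]]`;
for each `k` only finitely many of the counts `Nᵢ(k, j)` are nonzero, so the inner
`tsum` is a finite sum. -/
noncomputable def genFun (p i : ℕ) (d : Fin (p + 1) → ℝ) : PowerSeries ℝ :=
  PowerSeries.mk fun k =>
    ∑' j : Fin (p + 1) → ℕ, (Ncount p i k j : ℝ) * ∏ l, d l ^ j l

/-!
Read `W₀ᵏ` as a zigzag path in which the letter `l` is a step from height `l - 1` up to height `l`
and `l*` is a step from `l` down to `l - 1`. Then `Wᵢ` is one period of this path begun at height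
`i`, and `j_l` counts the right legs that start at height `l`.

In an adapted partition of `W₀ᵏ` the first `p` letters `1, …, p` are left legs of nested blocks.
Between the right leg `(s + 1)*` and the right leg `s*` of two consecutive ones the path goes from
height `s` to height `s`, so that this part of the word is a power `W_s^{k_s}`; the innermost block
surrounds a power of `W_p`, and what follows the outermost one is a power of `W₀`. The `p` right
legs contribute one to each of `j_1, …, j_p`, whence `N₀(k) = d_1 ⋯ d_p ∑ ∏ᵢ Nᵢ(kᵢ)` for the
polynomials `Nᵢ(k) = ∑_j Nᵢ(k, j) d^j`. The recurrence compares coefficients.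
-/

section PowerSeriesProducts

lemma sum_finsuppAntidiag_univ {ι μ M : Type*} [Fintype ι] [DecidableEq ι] [DecidableEq μ]
    [AddCommMonoid μ] [Finset.HasAntidiagonal μ] [AddCommMonoid M] (F : (ι → μ) → M) (n : μ) :
    ∑ f ∈ Finset.finsuppAntidiag Finset.univ n, F f = ∑ f ∈ Finset.piAntidiag Finset.univ n, F f :=
  Finset.sum_equiv Finsupp.equivFunOnFinite (by simp) fun _ _ => rfl

lemma coeff_monomial_mul_prod {σ ι R : Type*} [Finite σ] [Fintype ι] [CommSemiring R]
    (m n : σ →₀ ℕ) (f : ι → MvPowerSeries σ R) (S : Finset (ι → σ → ℕ))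
    (hS : ∀ J, J ∈ S ↔ ∀ r, m r + ∑ i, J i r = n r) :
    MvPowerSeries.coeff n (MvPowerSeries.monomial m 1 * ∏ i, f i) =
      ∑ J ∈ S, ∏ i, MvPowerSeries.coeff (Finsupp.equivFunOnFinite.symm (J i)) (f i) := by
  classical
  by_cases hmn : m ≤ n
  · obtain ⟨n, rfl⟩ := exists_add_of_le hmn
    rw [MvPowerSeries.coeff_add_monomial_mul, one_mul, MvPowerSeries.coeff_prod,
      sum_finsuppAntidiag_univ fun J => ∏ i, MvPowerSeries.coeff (J i) (f i)]
    refine Finset.sum_equiv (Equiv.arrowCongr (Equiv.refl ι) Finsupp.equivFunOnFinite)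
      (fun J => ?_) (by simp)
    simp [hS, Finsupp.ext_iff]
  · have hempty : S = ∅ := Finset.eq_empty_of_forall_notMem fun J hJ =>
      hmn fun r => Nat.le.intro ((hS J).1 hJ r)
    rw [MvPowerSeries.coeff_monomial_mul, if_neg hmn, hempty, Finset.sum_empty]

end PowerSeriesProducts

section NoncrossingPairings

/-- Noncrossing pair partitions of the interval `[a, b)`, encoded like `IsNCPP` by their blocks
`(left leg, right leg)`. Intervals allow a partition to be cut at a block. -/
structure IsNCPairing (a b : ℕ) (π : Finset (ℕ × ℕ)) : Prop where
  bounds : ∀ x ∈ π, a ≤ x.1 ∧ x.1 < x.2 ∧ x.2 < b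
  cover : ∀ m, a ≤ m → m < b → ∃ x ∈ π, m = x.1 ∨ m = x.2
  disjoint : ∀ x ∈ π, ∀ y ∈ π, (x.1 = y.1 ∨ x.1 = y.2 ∨ x.2 = y.1 ∨ x.2 = y.2) → x = y
  noncrossing : ∀ x ∈ π, ∀ y ∈ π, ¬(x.1 < y.1 ∧ y.1 < x.2 ∧ x.2 < y.2)

/-- The part of a partition `π` over the interval `[c, d)`, selected by the left legs. This suffices
to restrict `π` to `[c, d)` when no block has exactly one leg there. -/
def restrict (π : Finset (ℕ × ℕ)) (c d : ℕ) : Finset (ℕ × ℕ) :=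
  {x ∈ π | x.1 ∈ Finset.Ico c d}

variable {a b c d e : ℕ} {π π₁ π₂ : Finset (ℕ × ℕ)} {x : ℕ × ℕ}

lemma mem_restrict : x ∈ restrict π c d ↔ x ∈ π ∧ c ≤ x.1 ∧ x.1 < d := by
  rw [restrict, Finset.mem_filter, Finset.mem_Ico]

lemma isNCPP_iff_isNCPairing {m : ℕ} : IsNCPP m π ↔ IsNCPairing 1 (m + 1) π := by
  refine ⟨fun ⟨hb, hc, hd, hn⟩ => ⟨fun x hx => ?_, fun y hy hy' => hc y hy (by omega), hd, hn⟩,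
    fun h => ⟨fun x hx => ?_, fun y hy hy' => h.cover y hy (by omega), h.disjoint, h.noncrossing⟩⟩
  · have := hb x hx
    omega
  · have := h.bounds x hx
    omega

namespace IsNCPairing

lemma concat (hac : a ≤ c) (hcb : c ≤ b) (h₁ : IsNCPairing a c π₁) (h₂ : IsNCPairing c b π₂) :
    IsNCPairing a b (π₁ ∪ π₂) where
  bounds x hx := by
    rcases Finset.mem_union.1 hx with hx | hx
    · have := h₁.bounds x hx
      omega
    · have := h₂.bounds x hx
      omega
  cover m hm hm' := by
    rcases lt_or_ge m c with hmc | hmc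
    · obtain ⟨x, hx, hxm⟩ := h₁.cover m hm hmc
      exact ⟨x, Finset.mem_union_left _ hx, hxm⟩
    · obtain ⟨x, hx, hxm⟩ := h₂.cover m hmc hm'
      exact ⟨x, Finset.mem_union_right _ hx, hxm⟩
  disjoint x hx y hy hxy := by
    rcases Finset.mem_union.1 hx with hx | hx <;> rcases Finset.mem_union.1 hy with hy | hy
    · exact h₁.disjoint x hx y hy hxy
    · have := h₁.bounds x hx
      have := h₂.bounds y hy
      omega
    · have := h₂.bounds x hx
      have := h₁.bounds y hy
      omega
    · exact h₂.disjoint x hx y hy hxy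
  noncrossing x hx y hy := by
    rcases Finset.mem_union.1 hx with hx | hx <;> rcases Finset.mem_union.1 hy with hy | hy
    · exact h₁.noncrossing x hx y hy
    · have := h₁.bounds x hx
      have := h₂.bounds y hy
      omega
    · have := h₂.bounds x hx
      have := h₁.bounds y hy
      omega
    · exact h₂.noncrossing x hx y hy

lemma insert_outer (hae : a < e) (h : IsNCPairing (a + 1) e π) :
    IsNCPairing a (e + 1) (insert (a, e) π) where
  bounds x hx := by
    rcases Finset.mem_insert.1 hx with rfl | hx
    · exact ⟨le_rfl, hae, e.lt_succ_self⟩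
    · have := h.bounds x hx
      omega
  cover m hm hm' := by
    by_cases hend : m = a ∨ m = e
    · exact ⟨(a, e), Finset.mem_insert_self _ _, hend⟩
    · obtain ⟨x, hx, hxm⟩ := h.cover m (by omega) (by omega)
      exact ⟨x, Finset.mem_insert_of_mem hx, hxm⟩
  disjoint x hx y hy hxy := by
    rcases Finset.mem_insert.1 hx with rfl | hx <;> rcases Finset.mem_insert.1 hy with rfl | hy
    · rfl
    · have := h.bounds y hy
      dsimp only at hxy
      omega
    · have := h.bounds x hx
      dsimp only at hxy
      omega
    · exact h.disjoint x hx y hy hxy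
  noncrossing x hx y hy := by
    rcases Finset.mem_insert.1 hx with rfl | hx <;> rcases Finset.mem_insert.1 hy with rfl | hy
    · dsimp only
      omega
    · have := h.bounds y hy
      dsimp only
      omega
    · have := h.bounds x hx
      dsimp only
      omega
    · exact h.noncrossing x hx y hy

lemma glue (hae : a < e) (heb : e < b) (h₁ : IsNCPairing (a + 1) e π₁)
    (h₂ : IsNCPairing (e + 1) b π₂) : IsNCPairing a b (insert (a, e) (π₁ ∪ π₂)) := by
  rw [← Finset.insert_union]
  exact (h₁.insert_outer hae).concat (by omega) (by omega) h₂

protected lemma restrict (h : IsNCPairing a b π) (hac : a ≤ c) (hdb : d ≤ b)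
    (hclosed : ∀ x ∈ π, (c ≤ x.1 ∧ x.1 < d) ↔ (c ≤ x.2 ∧ x.2 < d)) :
    IsNCPairing c d (restrict π c d) where
  bounds x hx := by
    obtain ⟨hx, hxc⟩ := mem_restrict.1 hx
    have := h.bounds x hx
    have := hclosed x hx
    omega
  cover m hm hm' := by
    obtain ⟨x, hx, hxm⟩ := h.cover m (by omega) (by omega)
    have := hclosed x hx
    exact ⟨x, mem_restrict.2 ⟨hx, by omega⟩, hxm⟩
  disjoint x hx y hy := h.disjoint x (mem_restrict.1 hx).1 y (mem_restrict.1 hy).1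
  noncrossing x hx y hy := h.noncrossing x (mem_restrict.1 hx).1 y (mem_restrict.1 hy).1

lemma eq_or_inside_or_after (h : IsNCPairing a b π) (he : (a, e) ∈ π) (hx : x ∈ π) :
    x = (a, e) ∨ (a + 1 ≤ x.1 ∧ x.2 < e) ∨ e + 1 ≤ x.1 := by
  refine or_iff_not_imp_left.2 fun hne => ?_
  have hbounds := h.bounds x hx
  have hdisj := mt (h.disjoint x hx _ he) hne
  have hcross := h.noncrossing _ he x hx
  dsimp only at hdisj hcross
  omega

lemma restrict_inside (h : IsNCPairing a b π) (he : (a, e) ∈ π) :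
    IsNCPairing (a + 1) e (restrict π (a + 1) e) := by
  have hae := h.bounds _ he
  refine h.restrict (by omega) hae.2.2.le fun x hx => ?_
  have := h.bounds x hx
  rcases h.eq_or_inside_or_after he hx with rfl | hin | hout
  · dsimp only
    omega
  · omega
  · omega

lemma restrict_after (h : IsNCPairing a b π) (he : (a, e) ∈ π) :
    IsNCPairing (e + 1) b (restrict π (e + 1) b) := by
  have hae := h.bounds _ he
  dsimp only at hae
  refine h.restrict (by omega) le_rfl fun x hx => ?_
  have := h.bounds x hx
  rcases h.eq_or_inside_or_after he hx with rfl | hin | hout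
  · dsimp only
    omega
  · omega
  · omega

lemma insert_restrict_union_restrict (h : IsNCPairing a b π) (he : (a, e) ∈ π) :
    insert (a, e) (restrict π (a + 1) e ∪ restrict π (e + 1) b) = π := by
  ext x
  simp only [Finset.mem_insert, Finset.mem_union, mem_restrict]
  refine ⟨?_, fun hx => ?_⟩
  · rintro (rfl | hx | hx)
    exacts [he, hx.1, hx.1]
  · have := h.bounds x hx
    rcases h.eq_or_inside_or_after he hx with rfl | hin | hout
    · exact Or.inl rfl
    · exact Or.inr (Or.inl ⟨hx, by omega⟩)
    · exact Or.inr (Or.inr ⟨hx, by omega⟩)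

lemma restrict_glue_inside (h₁ : IsNCPairing (a + 1) e π₁) (h₂ : IsNCPairing (e + 1) b π₂) :
    restrict (insert (a, e) (π₁ ∪ π₂)) (a + 1) e = π₁ := by
  ext x
  simp only [mem_restrict, Finset.mem_insert, Finset.mem_union]
  refine ⟨?_, fun hx => ⟨Or.inr (Or.inl hx), ?_⟩⟩
  · rintro ⟨rfl | hx | hx, hxa, hxe⟩
    · dsimp only at hxa
      omega
    · exact hx
    · have := h₂.bounds x hx
      omega
  · have := h₁.bounds x hx
    omega

lemma restrict_glue_after (hae : a < e) (h₁ : IsNCPairing (a + 1) e π₁)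
    (h₂ : IsNCPairing (e + 1) b π₂) :
    restrict (insert (a, e) (π₁ ∪ π₂)) (e + 1) b = π₂ := by
  ext x
  simp only [mem_restrict, Finset.mem_insert, Finset.mem_union]
  refine ⟨?_, fun hx => ⟨Or.inr (Or.inr hx), ?_⟩⟩
  · rintro ⟨rfl | hx | hx, hxe, _⟩
    · dsimp only at hxe
      omega
    · have := h₁.bounds x hx
      omega
    · exact hx
  · have := h₂.bounds x hx
    omega

lemma existsUnique_partner_left (h : IsNCPairing a b π) (hab : a < b) :
    ∃! e, e ∈ Finset.Ico (a + 1) b ∧ (a, e) ∈ π := by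
  obtain ⟨⟨a', e⟩, hx, hax⟩ := h.cover a le_rfl hab
  have hbounds := h.bounds _ hx
  dsimp only at hax hbounds
  obtain rfl : a = a' := by omega
  refine ⟨e, ⟨Finset.mem_Ico.2 ⟨hbounds.2.1, hbounds.2.2⟩, hx⟩, fun e' he' => ?_⟩
  exact congrArg Prod.snd (h.disjoint _ he'.2 _ hx (Or.inl rfl))

end IsNCPairing

open Classical in
/-- The finset of noncrossing pair partitions of `[a, b)`. -/
noncomputable def ncPairings (a b : ℕ) : Finset (Finset (ℕ × ℕ)) :=
  (Finset.Ico a b ×ˢ Finset.Ico a b).powerset.filter (IsNCPairing a b)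

lemma mem_ncPairings : π ∈ ncPairings a b ↔ IsNCPairing a b π := by
  classical
  rw [ncPairings, Finset.mem_filter, Finset.mem_powerset, and_iff_right_iff_imp]
  intro h x hx
  have := h.bounds x hx
  simp only [Finset.mem_product, Finset.mem_Ico]
  omega

lemma ncPairings_of_le (hba : b ≤ a) : ncPairings a b = {∅} := by
  ext π
  rw [mem_ncPairings, Finset.mem_singleton]
  refine ⟨fun h => Finset.eq_empty_of_forall_notMem fun x hx => ?_, ?_⟩
  · have := h.bounds x hx
    omega
  · rintro rfl
    exact ⟨by simp, fun m _ _ => by omega, by simp, by simp⟩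

end NoncrossingPairings

section WeightedSums

variable {A : Type*} [CommSemiring A]

/-- The sum over all noncrossing pair partitions of `[a, b)` of the product of the weights of the
blocks. Blocks of weight `0` are thereby forbidden. -/
noncomputable def ncSum (w : ℕ × ℕ → A) (a b : ℕ) : A :=
  ∑ π ∈ ncPairings a b, ∏ x ∈ π, w x

lemma ncSum_of_le (w : ℕ × ℕ → A) {a b : ℕ} (hba : b ≤ a) : ncSum w a b = 1 := by
  simp [ncSum, ncPairings_of_le hba]

lemma ncSum_congr {w w' : ℕ × ℕ → A} {a b : ℕ}
    (h : ∀ x : ℕ × ℕ, a ≤ x.1 → x.1 < x.2 → x.2 < b → w x = w' x) :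
    ncSum w a b = ncSum w' a b := by
  refine Finset.sum_congr rfl fun π hπ => Finset.prod_congr rfl fun x hx => ?_
  obtain ⟨hax, hx', hxb⟩ := (mem_ncPairings.1 hπ).bounds x hx
  exact h x hax hx' hxb

lemma prod_glue (w : ℕ × ℕ → A) {a b e : ℕ} {π₁ π₂ : Finset (ℕ × ℕ)}
    (h₁ : IsNCPairing (a + 1) e π₁) (h₂ : IsNCPairing (e + 1) b π₂) (hae : a < e) :
    ∏ x ∈ insert (a, e) (π₁ ∪ π₂), w x = w (a, e) * ((∏ x ∈ π₁, w x) * ∏ x ∈ π₂, w x) := by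
  have hdisj : Disjoint π₁ π₂ := Finset.disjoint_left.2 fun x hx₁ hx₂ => by
    have := h₁.bounds x hx₁
    have := h₂.bounds x hx₂
    omega
  have hnotMem : (a, e) ∉ π₁ ∪ π₂ := fun hmem => by
    rcases Finset.mem_union.1 hmem with hmem | hmem
    · have := h₁.bounds _ hmem
      dsimp only at this
      omega
    · have := h₂.bounds _ hmem
      dsimp only at this
      omega
  rw [Finset.prod_insert hnotMem, Finset.prod_union hdisj]

lemma sum_prod_of_mem (w : ℕ × ℕ → A) {a b e : ℕ} (hae : a < e) (heb : e < b) :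
    ∑ π ∈ ncPairings a b with (a, e) ∈ π, ∏ x ∈ π, w x =
      w (a, e) * (ncSum w (a + 1) e * ncSum w (e + 1) b) := by
  rw [ncSum, ncSum, Finset.sum_mul_sum, ← Finset.sum_product', Finset.mul_sum]
  refine Finset.sum_nbij' (fun π => (restrict π (a + 1) e, restrict π (e + 1) b))
    (fun ρ => insert (a, e) (ρ.1 ∪ ρ.2)) ?_ ?_ ?_ ?_ ?_
  all_goals simp only [Finset.mem_filter, Finset.mem_product, mem_ncPairings]
  · exact fun π ⟨h, he⟩ => ⟨h.restrict_inside he, h.restrict_after he⟩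
  · exact fun ρ ⟨h₁, h₂⟩ => ⟨h₁.glue hae heb h₂, Finset.mem_insert_self _ _⟩
  · exact fun π ⟨h, he⟩ => h.insert_restrict_union_restrict he
  · exact fun ρ ⟨h₁, h₂⟩ =>
      Prod.ext (h₁.restrict_glue_inside h₂) (h₁.restrict_glue_after hae h₂)
  · intro π ⟨h, he⟩
    rw [← prod_glue w (h.restrict_inside he) (h.restrict_after he) hae,
      h.insert_restrict_union_restrict he]

lemma ncSum_eq_sum_partner (w : ℕ × ℕ → A) {a b : ℕ} (hab : a < b) :
    ncSum w a b =
      ∑ e ∈ Finset.Ico (a + 1) b, w (a, e) * (ncSum w (a + 1) e * ncSum w (e + 1) b) := by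
  have hpartner : ncPairings a b =
      (Finset.Ico (a + 1) b).biUnion fun e => {π ∈ ncPairings a b | (a, e) ∈ π} := by
    ext π
    simp only [Finset.mem_biUnion, Finset.mem_filter]
    refine ⟨fun hπ => ?_, fun ⟨_, _, hπ, _⟩ => hπ⟩
    obtain ⟨e, he, heπ⟩ := ((mem_ncPairings.1 hπ).existsUnique_partner_left hab).exists
    exact ⟨e, he, hπ, heπ⟩
  rw [ncSum, hpartner, Finset.sum_biUnion]
  · refine Finset.sum_congr rfl fun e he => ?_
    rw [Finset.mem_Ico] at he
    exact sum_prod_of_mem w he.1 he.2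
  · intro e he e' he' hne
    refine Finset.disjoint_left.2 fun π hπ hπ' => hne ?_
    rw [Finset.mem_filter] at hπ hπ'
    exact ((mem_ncPairings.1 hπ.1).existsUnique_partner_left hab).unique
      ⟨he, hπ.2⟩ ⟨he', hπ'.2⟩

lemma ncSum_add_right (w : ℕ × ℕ → A) (a b c : ℕ) :
    ncSum w (a + c) (b + c) = ncSum (fun x => w (x.1 + c, x.2 + c)) a b := by
  induction hn : b - a using Nat.strong_induction_on generalizing a b with
  | _ n ih =>
    rcases le_or_gt b a with hba | hab
    · rw [ncSum_of_le _ hba, ncSum_of_le _ (by omega)]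
    rw [ncSum_eq_sum_partner _ hab, ncSum_eq_sum_partner _ (by omega), add_right_comm a c 1,
      ← Finset.sum_Ico_add']
    refine Finset.sum_congr rfl fun e he => ?_
    rw [Finset.mem_Ico] at he
    rw [add_right_comm e c 1, ih (e - (a + 1)) (by omega) (a + 1) e rfl,
      ih (b - (e + 1)) (by omega) (e + 1) b rfl]

end WeightedSums

section Letters

/-- The involution `l ↔ l*` on letters. -/
def adjointLetter (c : ℕ × Bool) : ℕ × Bool := (c.1, !c.2)

/-- The height at which a letter starts when `l` is read as a step from height `l - 1` to `l` and
`l*` as a step from `l` to `l - 1`. Thus `j_l` counts the right legs starting at height `l`. -/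
def startHeight (c : ℕ × Bool) : ℕ := if c.2 then c.1 else c.1 - 1

lemma labelW_fst_mem_Icc {p : ℕ} (hp : 1 ≤ p) (i m : ℕ) :
    1 ≤ (labelW p i m).1 ∧ (labelW p i m).1 ≤ p := by
  have := Nat.mod_lt (m - 1 + (2 * p - i)) (show 0 < 2 * p by omega)
  unfold labelW letter0
  split_ifs <;> dsimp only <;> omega

lemma startHeight_labelW_le {p : ℕ} (hp : 1 ≤ p) (i m : ℕ) :
    startHeight (labelW p i m) ≤ p := by
  have := labelW_fst_mem_Icc hp i m
  unfold startHeight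
  split_ifs <;> omega

lemma labelW_zero_add {p i c t m : ℕ} (hi : i ≤ 2 * p) (hc : c + i = 2 * p * t) (hm : 1 ≤ m) :
    labelW p 0 (m + c) = labelW p i m := by
  have hshift : m + c - 1 + (2 * p - 0) + 2 * p * 1 = m - 1 + (2 * p - i) + 2 * p * (t + 1) := by
    rw [mul_add, ← hc]
    omega
  unfold labelW
  rw [← Nat.add_mul_mod_self_left _ _ 1, hshift, Nat.add_mul_mod_self_left]

lemma labelW_zero_succ {p s : ℕ} (hs : s < p) : labelW p 0 (s + 1) = (s + 1, false) := by
  unfold labelW letter0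
  rw [Nat.add_sub_cancel, Nat.sub_zero, Nat.add_mod_right, Nat.mod_eq_of_lt (by omega),
    if_pos (by omega)]

lemma labelW_zero_eq_star_iff {p s e : ℕ} (hs : s < p) (he : 1 ≤ e) :
    labelW p 0 e = (s + 1, true) ↔ ∃ q, e = 2 * p * q + (2 * p - s) := by
  have hmod : labelW p 0 e = (s + 1, true) ↔ (e - 1) % (2 * p) = 2 * p - s - 1 := by
    have := Nat.mod_lt (e - 1) (show 0 < 2 * p by omega)
    unfold labelW letter0
    rw [Nat.sub_zero, Nat.add_mod_right]
    split_ifs <;> simp only [Prod.mk.injEq, Bool.false_eq_true, and_false, and_true, false_iff] <;>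
      omega
  rw [hmod]
  constructor
  · intro h
    have := Nat.div_add_mod (e - 1) (2 * p)
    exact ⟨(e - 1) / (2 * p), by omega⟩
  · rintro ⟨q, rfl⟩
    rw [show 2 * p * q + (2 * p - s) - 1 = 2 * p - s - 1 + 2 * p * q by clear hmod; omega,
      Nat.add_mul_mod_self_left, Nat.mod_eq_of_lt (by omega)]

lemma exists_letter_eq_iff_eq_adjointLetter {p : ℕ} (c c' : ℕ × Bool) (hc : 1 ≤ c.1 ∧ c.1 ≤ p) :
    (∃ l, 1 ≤ l ∧ l ≤ p ∧
      ((c = (l, false) ∧ c' = (l, true)) ∨ (c = (l, true) ∧ c' = (l, false)))) ↔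
      c' = adjointLetter c := by
  constructor
  · rintro ⟨l, -, -, ⟨rfl, rfl⟩ | ⟨rfl, rfl⟩⟩ <;> rfl
  · rintro rfl
    obtain ⟨l, _ | _⟩ := c
    exacts [⟨l, hc.1, hc.2, Or.inl ⟨rfl, rfl⟩⟩, ⟨l, hc.1, hc.2, Or.inr ⟨rfl, rfl⟩⟩]

lemma adaptedNCPP_iff {p : ℕ} (hp : 1 ≤ p) (i k : ℕ) (π : Finset (ℕ × ℕ)) :
    AdaptedNCPP p i k π ↔ IsNCPairing 1 (2 * p * k + 1) π ∧
      ∀ x ∈ π, labelW p i x.2 = adjointLetter (labelW p i x.1) := by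
  simp only [AdaptedNCPP, isNCPP_iff_isNCPairing,
    exists_letter_eq_iff_eq_adjointLetter _ _ (labelW_fst_mem_Icc hp i _)]

lemma NCset_eq_filter_ncPairings {p : ℕ} (hp : 1 ≤ p) (i k : ℕ) :
    NCset p i k = {π ∈ ncPairings 1 (2 * p * k + 1) |
      ∀ x ∈ π, labelW p i x.2 = adjointLetter (labelW p i x.1)} := by
  classical
  ext π
  rw [NCset, Finset.mem_filter, Finset.mem_filter, Finset.mem_powerset, mem_ncPairings,
    adaptedNCPP_iff hp, and_iff_right_iff_imp]
  intro ⟨h, _⟩ x hx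
  have := h.bounds x hx
  simp only [Finset.mem_product, Finset.mem_Icc]
  omega

lemma jstat_eq_card_startHeight {p : ℕ} (hp : 1 ≤ p) (i : ℕ) (π : Finset (ℕ × ℕ)) (l : ℕ) :
    jstat p i π l = {x ∈ π | startHeight (labelW p i x.2) = l}.card := by
  simp only [jstat, Finset.card_filter, ← Finset.sum_add_distrib]
  refine Finset.sum_congr rfl fun x _ => ?_
  have hpos := (labelW_fst_mem_Icc hp i x.2).1
  generalize labelW p i x.2 = c at hpos ⊢
  obtain ⟨r, _ | _⟩ := c
  · have : r = l + 1 ↔ r - 1 = l := by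
      dsimp only at hpos
      omega
    simp [startHeight, this]
  · simp [startHeight]

end Letters

section AdaptedSums

variable {A : Type*} [CommSemiring A]

/-- The weight of a block for the word `Wᵢ`: `d_h` if the block is adapted and its right leg starts
at height `h`, and `0` if the block is not adapted. -/
def blockWeight (p i : ℕ) (d : ℕ → A) (x : ℕ × ℕ) : A :=
  if labelW p i x.2 = adjointLetter (labelW p i x.1) then d (startHeight (labelW p i x.2)) else 0

/-- The polynomial `∑_j Nᵢ(k, j) d^j`, as a weighted sum over noncrossing pair partitions. -/
noncomputable def wordSum (p i : ℕ) (d : ℕ → A) (k : ℕ) : A :=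
  ncSum (blockWeight p i d) 1 (2 * p * k + 1)

/-- The analogue of `wordSum` for the word left of `W₀^{q+1}` after removing its first `s` and its
last `s` letters, where `s ≤ p`. -/
noncomputable def strippedSum (p : ℕ) (d : ℕ → A) (s q : ℕ) : A :=
  ncSum (blockWeight p 0 d) (s + 1) (2 * p * q + (2 * p - s) + 1)

lemma ncSum_blockWeight_eq_wordSum {p i c t : ℕ} (hi : i ≤ 2 * p) (hc : c + i = 2 * p * t)
    (d : ℕ → A) (k : ℕ) :
    ncSum (blockWeight p 0 d) (c + 1) (c + 1 + 2 * p * k) = wordSum p i d k := by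
  rw [add_comm c 1, add_right_comm, add_comm 1 (2 * p * k), ncSum_add_right]
  refine ncSum_congr fun x hx hx' _ => ?_
  simp only [blockWeight, labelW_zero_add hi hc hx, labelW_zero_add hi hc (hx.trans hx'.le)]

lemma blockWeight_zero_succ_left {p s e : ℕ} (d : ℕ → A) (hs : s < p) :
    blockWeight p 0 d (s + 1, e) = if labelW p 0 e = (s + 1, true) then d (s + 1) else 0 := by
  unfold blockWeight
  rw [labelW_zero_succ hs]
  refine ite_congr rfl (fun h => ?_) fun _ => rfl
  rw [h]
  rfl

lemma strippedSum_zero (p : ℕ) (d : ℕ → A) (q : ℕ) :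
    strippedSum p d 0 q = wordSum p 0 d (q + 1) := rfl

lemma strippedSum_self (p : ℕ) (d : ℕ → A) (q : ℕ) : strippedSum p d p q = wordSum p p d q := by
  rw [← ncSum_blockWeight_eq_wordSum (c := p) (t := 1) (by omega) (by ring), strippedSum]
  congr 1
  omega

lemma strippedSum_succ {p s : ℕ} (d : ℕ → A) (hs : s < p) (q : ℕ) :
    strippedSum p d s q = ∑ x ∈ Finset.HasAntidiagonal.antidiagonal q,
      d (s + 1) * (strippedSum p d (s + 1) x.1 * wordSum p s d x.2) := by
  rw [strippedSum, ncSum_eq_sum_partner _ (by omega)]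
  symm
  refine Finset.sum_of_injOn (fun x => 2 * p * x.1 + (2 * p - s)) ?_ ?_ ?_ ?_
  · rintro ⟨u, v⟩ hx ⟨u', v'⟩ hx' h
    simp only [Finset.mem_coe, Finset.HasAntidiagonal.mem_antidiagonal] at hx hx' h
    obtain rfl : u = u' := Nat.eq_of_mul_eq_mul_left (show 0 < 2 * p by omega) (by omega)
    obtain rfl : v = v' := by omega
    rfl
  · rintro ⟨u, v⟩ hx
    obtain rfl : u + v = q := by simpa using hx
    simp only [Finset.mem_coe, Finset.mem_Ico, mul_add]
    omega
  · intro e he hnotImage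
    rw [Finset.mem_Ico] at he
    rw [blockWeight_zero_succ_left d hs, if_neg, zero_mul]
    rw [labelW_zero_eq_star_iff hs (by omega)]
    rintro ⟨u, rfl⟩
    have hu : u ≤ q := Nat.le_of_mul_le_mul_left (show 2 * p * u ≤ 2 * p * q by omega) (by omega)
    exact hnotImage ⟨(u, q - u), by simpa using Nat.add_sub_of_le hu, rfl⟩
  · rintro ⟨u, v⟩ hx
    obtain rfl : u + v = q := by simpa using hx
    have hstar : labelW p 0 (2 * p * u + (2 * p - s)) = (s + 1, true) :=
      (labelW_zero_eq_star_iff hs (by omega)).2 ⟨u, rfl⟩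
    rw [blockWeight_zero_succ_left d hs, if_pos hstar, strippedSum,
      ← ncSum_blockWeight_eq_wordSum (c := 2 * p * u + (2 * p - s)) (t := u + 1) (by omega)
        (by rw [mul_add]; omega)]
    congr 3
    · dsimp only
      omega
    · rw [mul_add]
      dsimp only
      omega

lemma mk_strippedSum_succ {p s : ℕ} (d : ℕ → A) (hs : s < p) :
    PowerSeries.mk (strippedSum p d s) = PowerSeries.C (d (s + 1)) *
      (PowerSeries.mk (strippedSum p d (s + 1)) * PowerSeries.mk (wordSum p s d)) := by
  ext q
  rw [PowerSeries.coeff_C_mul, PowerSeries.coeff_mul, PowerSeries.coeff_mk, strippedSum_succ d hs,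
    Finset.mul_sum]
  simp only [PowerSeries.coeff_mk]

lemma mk_strippedSum_zero {p s : ℕ} (d : ℕ → A) (hs : s ≤ p) :
    PowerSeries.mk (strippedSum p d 0) = PowerSeries.C (∏ l ∈ Finset.range s, d (l + 1)) *
      ((∏ i ∈ Finset.range s, PowerSeries.mk (wordSum p i d)) *
        PowerSeries.mk (strippedSum p d s)) := by
  induction s with
  | zero => simp
  | succ s ih =>
    rw [ih (by omega), mk_strippedSum_succ d hs, Finset.prod_range_succ, Finset.prod_range_succ,
      map_mul]
    ring

lemma wordSum_zero_succ (p : ℕ) (d : ℕ → A) (k : ℕ) :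
    wordSum p 0 d (k + 1) = (∏ l ∈ Finset.range p, d (l + 1)) *
      ∑ κ ∈ Finset.Nat.antidiagonalTuple (p + 1) k, ∏ i : Fin (p + 1), wordSum p i d (κ i) := by
  have hcoeff := congrArg (PowerSeries.coeff k) (mk_strippedSum_zero d (le_refl p))
  rw [PowerSeries.coeff_mk, strippedSum_zero, funext (strippedSum_self p d),
    ← Finset.prod_range_succ, PowerSeries.coeff_C_mul,
    Finset.prod_range fun i => PowerSeries.mk (wordSum p i d), PowerSeries.coeff_prod] at hcoeff
  simp only [PowerSeries.coeff_mk] at hcoeff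
  rw [hcoeff, ← Finset.piAntidiag_univ_fin_eq_antidiagonalTuple,
    sum_finsuppAntidiag_univ fun κ : Fin (p + 1) → ℕ => ∏ i : Fin (p + 1), wordSum p i d (κ i)]

end AdaptedSums

section Coefficients

/-- The indeterminate `d_l` of the generating function, for `l ≤ p`. The index is a natural number
reduced modulo `p + 1`, so that indeterminates can be used as weights `ℕ → A`. -/
noncomputable def heightVar (p l : ℕ) : MvPowerSeries (Fin (p + 1)) ℕ :=
  MvPowerSeries.X (Fin.ofNat (p + 1) l)

lemma prod_heightVar {ι : Type*} (p : ℕ) (s : Finset ι) (h : ι → ℕ) :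
    ∏ x ∈ s, heightVar p (h x) =
      MvPowerSeries.monomial (∑ x ∈ s, Finsupp.single (Fin.ofNat (p + 1) (h x)) 1) 1 := by
  simp only [heightVar, MvPowerSeries.X, MvPowerSeries.prod_monomial, Finset.prod_const_one]

lemma sum_single_ofNat_succ_apply (p : ℕ) (r : Fin (p + 1)) :
    (∑ l ∈ Finset.range p, Finsupp.single (Fin.ofNat (p + 1) (l + 1)) 1 : Fin (p + 1) →₀ ℕ) r =
      if r = 0 then 0 else 1 := by
  have hsucc (l : Fin p) : Fin.ofNat (p + 1) (l + 1) = l.succ :=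
    Fin.ext (Nat.mod_eq_of_lt (Nat.succ_lt_succ l.2))
  simp only [Finset.sum_range, hsucc, Finsupp.finsetSum_apply, Finsupp.single_apply]
  cases r using Fin.cases with
  | zero => simp
  | succ r => simp

lemma sum_single_startHeight_apply {p : ℕ} (hp : 1 ≤ p) (i : ℕ) (π : Finset (ℕ × ℕ))
    (r : Fin (p + 1)) :
    (∑ x ∈ π, Finsupp.single (Fin.ofNat (p + 1) (startHeight (labelW p i x.2))) 1 :
      Fin (p + 1) →₀ ℕ) r = jstat p i π r := by
  have hval (m : ℕ) :
      Fin.ofNat (p + 1) (startHeight (labelW p i m)) = r ↔ startHeight (labelW p i m) = r := by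
    rw [Fin.ext_iff, Fin.val_ofNat,
      Nat.mod_eq_of_lt (Nat.lt_succ_of_le (startHeight_labelW_le hp i m))]
  simp only [jstat_eq_card_startHeight hp, Finset.card_filter, Finsupp.finsetSum_apply,
    Finsupp.single_apply, hval]

lemma Ncount_eq_coeff_wordSum {p : ℕ} (hp : 1 ≤ p) (i k : ℕ) (j : Fin (p + 1) → ℕ) :
    Ncount p i k j = MvPowerSeries.coeff (Finsupp.equivFunOnFinite.symm j)
      (wordSum p i (heightVar p) k) := by
  classical
  rw [Ncount, NCset_eq_filter_ncPairings hp, Finset.card_filter, Finset.sum_filter, wordSum, ncSum,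
    map_sum]
  refine Finset.sum_congr rfl fun π _ => ?_
  simp only [blockWeight, Finset.prod_ite_zero, prod_heightVar, apply_ite (MvPowerSeries.coeff _),
    map_zero, MvPowerSeries.coeff_monomial, Finsupp.ext_iff, sum_single_startHeight_apply hp,
    Finsupp.equivFunOnFinite_symm_apply_apply, eq_comm (a := j _)]

lemma mem_columnSums_iff {ι : Type*} [Fintype ι] [DecidableEq ι] {n : ℕ} (j : Fin (n + 1) → ℕ)
    (J : ι → Fin (n + 1) → ℕ) :
    J ∈ (Fintype.piFinset fun _ : ι =>
        Fintype.piFinset fun r : Fin (n + 1) => Finset.range (j r + 1)).filter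
        (fun J => (∑ i, J i 0 = j 0) ∧ ∀ r : Fin (n + 1), r ≠ 0 → (∑ i, J i r) + 1 = j r) ↔
      ∀ r, (if r = 0 then 0 else 1) + ∑ i, J i r = j r := by
  simp only [Finset.mem_filter, Fintype.mem_piFinset, Finset.mem_range]
  refine ⟨fun ⟨_, h0, h1⟩ r => ?_, fun h => ⟨fun i r => ?_, by simpa using h 0, fun r hr => ?_⟩⟩
  · split_ifs with hr
    · rw [hr, zero_add, h0]
    · rw [add_comm, h1 r hr]
  · have hle : J i r ≤ ∑ i, J i r :=
      Finset.single_le_sum_of_canonicallyOrdered (f := (J · r)) (Finset.mem_univ i)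
    have := h r
    omega
  · rw [← h r, if_neg hr, add_comm]

end Coefficients

/-- The recurrence (5): for `p, k ≥ 1` and any tuple `(j₀, …, j_p)`,
`N₀(k, j) = Σ ∏_{i=0}^{p} Nᵢ(kᵢ, (j_{i,0}, …, j_{i,p}))`, the sum running over all
`(k₀, …, k_p)` with `k₀ + ⋯ + k_p = k − 1` and all matrices `(j_{i,r})` of
nonnegative integers with column sums `Σᵢ j_{i,0} = j₀` and `Σᵢ j_{i,r} = j_r − 1`
for `r ∈ {1, …, p}` (so the sum is empty if some `j_r = 0` with `r ≥ 1`). -/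
theorem Ncount_recurrence (p k : ℕ) (hp : 1 ≤ p) (hk : 1 ≤ k)
    (j : Fin (p + 1) → ℕ) :
    Ncount p 0 k j =
      ∑ κ ∈ Finset.Nat.antidiagonalTuple (p + 1) (k - 1),
        ∑ J ∈ (Fintype.piFinset fun _ : Fin (p + 1) =>
            Fintype.piFinset fun r : Fin (p + 1) => Finset.range (j r + 1)).filter
            (fun J => (∑ i, J i 0 = j 0) ∧
              ∀ r : Fin (p + 1), r ≠ 0 → (∑ i, J i r) + 1 = j r),
          ∏ i : Fin (p + 1), Ncount p (i : ℕ) (κ i) (J i) := by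
  obtain ⟨k, rfl⟩ : ∃ k', k = k' + 1 := Nat.exists_eq_add_of_le' hk
  rw [Ncount_eq_coeff_wordSum hp, wordSum_zero_succ, Finset.mul_sum, map_sum, Nat.add_sub_cancel]
  refine Finset.sum_congr rfl fun κ _ => ?_
  simp only [Ncount_eq_coeff_wordSum hp, prod_heightVar]
  refine coeff_monomial_mul_prod _ _ _ _ fun J => ?_
  simp only [mem_columnSums_iff, sum_single_ofNat_succ_apply,
    Finsupp.equivFunOnFinite_symm_apply_apply]
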